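/- Let V and B be finite types and E : V → B → V → Prop an edge-labeled directed multigraph. For all v₁ v₂ : V, if there is a walk from v₁ to v₂ with trace t, then there is a walk from v₁ to v₂ with trace t' such that t'.toFinset = t.toFinset (the same set of memory blocks is accessed) and t'.length ≤ Fintype.card V * Fintype.card B. -/

import Mathlib

/-- `Walk E u v t`: there is a walk from `u` to `v` in the edge-labeled directed
multigraph `E` whose list of edge labels, in order, is `t`. -/
inductive Walk {V B : Type*} (E : V → B → V → Prop) : V → V → List B → Prop
  | nil (v : V) : Walk E v v []
  | cons {u v w : V} {b : B} {t : List B} :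
      E u b v → Walk E v w t → Walk E u w (b :: t)

/-- A walk together with the list of its vertices. -/
inductive VWalk {V B : Type*} (E : V → B → V → Prop) : V → V → List B → List V → Prop
  | nil (v : V) : VWalk E v v [] [v]
  | cons {u v w : V} {b : B} {t : List B} {l : List V} :
      E u b v → VWalk E v w t l → VWalk E u w (b :: t) (u :: l)

theorem VWalk.toWalk {V B : Type*} {E : V → B → V → Prop} {u w : V} {t : List B} {l : List V}
    (h : VWalk E u w t l) : Walk E u w t := by
  induction h with
  | nil v => exact Walk.nil v
  | cons e _ ih => exact Walk.cons e ih

theorem VWalk.length_eq {V B : Type*} {E : V → B → V → Prop} {u w : V} {t : List B} {l : List V}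
    (h : VWalk E u w t l) : l.length = t.length + 1 := by
  induction h with
  | nil v => rfl
  | cons e _ ih => simp [ih]

theorem VWalk.drop {V B : Type*} {E : V → B → V → Prop} {u w : V} {t : List B} {l : List V}
    (h : VWalk E u w t l) (hl : l.Nodup) (x : V) (hx : x ∈ l) :
    ∃ t' l', VWalk E x w t' l' ∧ l'.Nodup ∧ t' ⊆ t := by
  induction h with
  | nil v =>
    obtain rfl : x = v := by simpa using hx
    exact ⟨_, _, VWalk.nil x, hl, fun _ h => h⟩
  | @cons u v w b t l e h ih =>
    rcases List.mem_cons.1 hx with rfl | hx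
    · exact ⟨_, _, VWalk.cons e h, hl, fun _ h => h⟩
    · obtain ⟨t', l', h1, h2, h3⟩ := ih (List.nodup_cons.1 hl).2 hx
      exact ⟨t', l', h1, h2, fun a ha => List.mem_cons_of_mem _ (h3 ha)⟩

theorem Walk.exists_path {V B : Type*} {E : V → B → V → Prop} {u w : V} {t : List B}
    (h : Walk E u w t) : ∃ t' l', VWalk E u w t' l' ∧ l'.Nodup ∧ t' ⊆ t := by
  induction h with
  | nil v => exact ⟨_, _, VWalk.nil v, by simp, fun _ h => h⟩
  | @cons u v w b t e h ih =>
    obtain ⟨t', l', h1, h2, h3⟩ := ih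
    by_cases hu : u ∈ l'
    · obtain ⟨t2, l2, g1, g2, g3⟩ := h1.drop h2 u hu
      exact ⟨t2, l2, g1, g2, fun a ha => List.mem_cons_of_mem _ (h3 (g3 ha))⟩
    · exact ⟨_, _, VWalk.cons e h1, List.nodup_cons.2 ⟨hu, h2⟩, List.cons_subset_cons b h3⟩

theorem Walk.short {V B : Type*} [Fintype V] {E : V → B → V → Prop} {u w : V} {t : List B}
    (h : Walk E u w t) : ∃ t', Walk E u w t' ∧ t' ⊆ t ∧ t'.length + 1 ≤ Fintype.card V := by
  obtain ⟨t', l', h1, h2, h3⟩ := h.exists_path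
  exact ⟨t', h1.toWalk, h3, h1.length_eq ▸ h2.length_le_card⟩

theorem Walk.append {V B : Type*} {E : V → B → V → Prop} {u v w : V} {t s : List B}
    (h : Walk E u v t) (hsnd : Walk E v w s) : Walk E u w (t ++ s) := by
  induction h with
  | nil v => exact hsnd
  | cons e _ ih => exact Walk.cons e (ih hsnd)

/-- Either all labels lie in `S`, or split at the first label outside `S`. -/
theorem Walk.split {V B : Type*} {E : V → B → V → Prop} {u w : V} {t : List B}
    (h : Walk E u w t) (S : Finset B) : (∀ a ∈ t, a ∈ S) ∨
      ∃ p b q x y, t = p ++ b :: q ∧ (∀ a ∈ p, a ∈ S) ∧ b ∉ S ∧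
        Walk E u x p ∧ E x b y ∧ Walk E y w q := by
  induction h with
  | nil v => left; simp
  | @cons u v w b t e h ih =>
    by_cases hb : b ∈ S
    · rcases ih with ih | ⟨p, c, q, x, y, rfl, h1, h2, h3, h4, h5⟩
      · left
        simpa [hb] using ih
      · right
        exact ⟨b :: p, c, q, x, y, rfl, by simpa [hb] using h1, h2, Walk.cons e h3, h4, h5⟩
    · right
      exact ⟨[], b, t, u, v, rfl, by simp, hb, Walk.nil u, e, h⟩

theorem Walk.cover {V B : Type*} [Fintype V] [DecidableEq B] {E : V → B → V → Prop} (w : V)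
    (n : ℕ) : ∀ (u : V) (t : List B) (S : Finset B), Walk E u w t → (t.toFinset \ S).card = n →
      ∃ t', Walk E u w t' ∧ t' ⊆ t ∧ (∀ a ∈ t, a ∉ S → a ∈ t') ∧
        t'.length + 1 ≤ n * Fintype.card V + Fintype.card V := by
  induction n using Nat.strong_induction_on with
  | _ n ih =>
    intro u t S h hn
    rcases h.split S with hS | ⟨p, b, q, x, y, rfl, h1, h2, h3, h4, h5⟩
    · obtain ⟨t', g1, g2, g3⟩ := h.short
      exact ⟨t', g1, g2, fun a ha hb => absurd (hS a ha) hb, by omega⟩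
    · have hlt : (q.toFinset \ insert b S).card < n := by
        rw [← hn]
        apply Finset.card_lt_card
        rw [Finset.ssubset_iff_of_subset]
        · exact ⟨b, by simp [h2], by simp⟩
        · intro a
          simp
          tauto
      obtain ⟨q', k1, k2, k3, k4⟩ := ih _ hlt y q (insert b S) h5 rfl
      obtain ⟨p', g1, g2, g3⟩ := h3.short
      refine ⟨p' ++ b :: q', g1.append (Walk.cons h4 k1), ?_, ?_, ?_⟩
      · intro a ha
        have := @g2 a
        have := @k2 a
        simp at ha ⊢
        tauto
      · intro a ha haS
        have := h1 a
        have := k3 a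
        simp at ha this ⊢
        tauto
      · have := Nat.mul_le_mul_right (Fintype.card V) (Nat.succ_le_of_lt hlt)
        rw [Nat.succ_mul] at this
        simp
        omega

/-- from any walk one can extract a walk between the same vertices
that accesses exactly the same set of blocks and has length at most
`Fintype.card V * Fintype.card B`. -/
theorem walk_same_blocks_short {V B : Type*} [Fintype V] [Fintype B] [DecidableEq B]
    (E : V → B → V → Prop) (v₁ v₂ : V) (t : List B) (hwalk : Walk E v₁ v₂ t) :
    ∃ t' : List B, Walk E v₁ v₂ t' ∧ t'.toFinset = t.toFinset ∧
      t'.length ≤ Fintype.card V * Fintype.card B := by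
  cases hwalk with
  | nil => exact ⟨[], Walk.nil _, rfl, by simp⟩
  | @cons _ v _ b t e h =>
    obtain ⟨t', h1, h2, h3, h4⟩ := Walk.cover v₂ _ v t {b} h rfl
    refine ⟨b :: t', Walk.cons e h1, ?_, ?_⟩
    · ext a
      have := @h2 a
      have := h3 a
      simp at this ⊢
      tauto
    · have hlt : (t.toFinset \ {b}).card < Fintype.card B := by
        apply Finset.card_lt_univ_of_notMem (x := b)
        simp
      have := Nat.mul_le_mul_right (Fintype.card V) (Nat.succ_le_of_lt hlt)
      rw [Nat.succ_mul] at this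
      rw [Nat.mul_comm (Fintype.card V)]
      simp
      omega
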